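/- Let (a₀,b₀) = (k,0) + j·(2,1) = (k+2j, j) with integers k ≥ 1 and j ≥ 1. Then there exist (1,−2)-homogeneous polynomials R, G ∈ K[x,y] such that R is not a monomial, en_{1,−2}(R) = (a₀,b₀), and [G,R] = R². (Explicitly, R := x^k(1+x²y)^j and G := −(1/(j+k))·x^{k−1}(1+x²y)^{j+1} have these properties.) -/

import Mathlib

open MvPolynomial

noncomputable section

variable {K : Type*} [Field K] [CharZero K]

/-- The support of `P` as a set of pairs `(i,j)` of exponents of `x^i y^j`. -/
def Supp (P : MvPolynomial (Fin 2) K) : Set (ℕ × ℕ) :=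
  {p | MvPolynomial.coeff (Finsupp.single 0 p.1 + Finsupp.single 1 p.2) P ≠ 0}

/-- The Jacobian bracket `[P,Q] = ∂ₓP ∂_yQ − ∂ₓQ ∂_yP`. -/
def Jb (P Q : MvPolynomial (Fin 2) K) : MvPolynomial (Fin 2) K :=
  pderiv 0 P * pderiv 1 Q - pderiv 0 Q * pderiv 1 P

/-- The `(ρ,σ)`-degree `v_{ρ,σ}(P)` (the maximum of `ρi+σj` on the support). -/
def wdeg (ρ σ : ℤ) (P : MvPolynomial (Fin 2) K) : ℤ :=
  sSup {d : ℤ | ∃ p ∈ Supp P, d = ρ * (p.1 : ℤ) + σ * (p.2 : ℤ)}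

/-- The support of the `(ρ,σ)`-leading form of `P`. -/
def LeadSupp (ρ σ : ℤ) (P : MvPolynomial (Fin 2) K) : Set (ℕ × ℕ) :=
  {p | p ∈ Supp P ∧ ρ * (p.1 : ℤ) + σ * (p.2 : ℤ) = wdeg ρ σ P}

/-- `P` is `(ρ,σ)`-homogeneous. -/
def IsHomog (ρ σ : ℤ) (P : MvPolynomial (Fin 2) K) : Prop :=
  ∀ p ∈ Supp P, ∀ q ∈ Supp P,
    ρ * (p.1 : ℤ) + σ * (p.2 : ℤ) = ρ * (q.1 : ℤ) + σ * (q.2 : ℤ)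

/-- `P` is a monomial: its support has at most one point. -/
def IsMonomial (P : MvPolynomial (Fin 2) K) : Prop := (Supp P).Subsingleton

/-- `e` is the point `en_{ρ,σ}(P)`: the point of the support of the leading form
with largest second coordinate. -/
def IsEn (ρ σ : ℤ) (P : MvPolynomial (Fin 2) K) (e : ℕ × ℕ) : Prop :=
  e ∈ LeadSupp ρ σ P ∧ ∀ q ∈ LeadSupp ρ σ P, q.2 ≤ e.2

/-- `e` is the point `st_{ρ,σ}(P)`: the point of the support of the leading form
with smallest second coordinate. -/
def IsSt (ρ σ : ℤ) (P : MvPolynomial (Fin 2) K) (e : ℕ × ℕ) : Prop :=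
  e ∈ LeadSupp ρ σ P ∧ ∀ q ∈ LeadSupp ρ σ P, e.2 ≤ q.2

/-!
Put `u = 1 + x²y` and `R = x^k u^j`. Since `[x, u] = x²` and the bracket is a biderivation,
`[x^a u^m, x^b u^n] = (a n - b m) x^(a+b+1) u^(m+n-1)`. The right-hand side is a multiple of
`R² = x^(2k) u^(2j)` when `(b, n) = (k, j)` and `(a, m) = (k - 1, j + 1)`, and the multiple is then
`(k - 1) j - k (j + 1) = -(k + j)`, so it suffices that `k + j` be invertible in the field.
-/

section

variable {F : Type*} [Field F]

theorem IsHomog.C_mul {ρ σ : ℤ} {P : MvPolynomial (Fin 2) F} (hP : IsHomog ρ σ P) (c : F) :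
    IsHomog ρ σ (C c * P) := by
  have supp_subset : Supp (C c * P) ⊆ Supp P := by
    intro p hp
    rw [Supp, Set.mem_ofPred_eq, coeff_C_mul] at hp
    exact right_ne_zero_of_mul hp
  exact fun p hp q hq => hP p (supp_subset hp) q (supp_subset hq)

theorem IsHomog.wdeg_eq {ρ σ : ℤ} {P : MvPolynomial (Fin 2) F} (hP : IsHomog ρ σ P)
    {p : ℕ × ℕ} (hp : p ∈ Supp P) : wdeg ρ σ P = ρ * p.1 + σ * p.2 := by
  have degrees_eq : {d : ℤ | ∃ q ∈ Supp P, d = ρ * (q.1 : ℤ) + σ * (q.2 : ℤ)} =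
      {ρ * (p.1 : ℤ) + σ * (p.2 : ℤ)} :=
    Set.eq_singleton_iff_unique_mem.mpr
      ⟨⟨p, hp, rfl⟩, fun _ ⟨q, hq, hd⟩ => hd.trans (hP q hq p hp)⟩
  rw [wdeg, degrees_eq, csSup_singleton]

theorem IsHomog.leadSupp_eq {ρ σ : ℤ} {P : MvPolynomial (Fin 2) F} (hP : IsHomog ρ σ P) :
    LeadSupp ρ σ P = Supp P :=
  Set.Subset.antisymm (fun _ hp => hp.1) fun _ hp => ⟨hp, (hP.wdeg_eq hp).symm⟩

theorem IsHomog.isEn_iff {ρ σ : ℤ} {P : MvPolynomial (Fin 2) F} (hP : IsHomog ρ σ P)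
    {e : ℕ × ℕ} : IsEn ρ σ P e ↔ e ∈ Supp P ∧ ∀ q ∈ Supp P, q.2 ≤ e.2 := by
  rw [IsEn, hP.leadSupp_eq]

theorem Jb_C_mul_left (c : F) (P Q : MvPolynomial (Fin 2) F) :
    Jb (C c * P) Q = C c * Jb P Q := by
  simp only [Jb, pderiv_C_mul]
  ring

theorem Jb_pow_mul_pow (f g : MvPolynomial (Fin 2) F) (a b m n : ℕ) :
    Jb (f ^ a * g ^ m) (f ^ b * g ^ n) =
      (a * f ^ (a - 1) * f ^ b * g ^ m * (n * g ^ (n - 1)) -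
        f ^ a * (b * f ^ (b - 1)) * (m * g ^ (m - 1)) * g ^ n) * Jb f g := by
  simp only [Jb, pderiv_mul, pderiv_pow]
  ring

theorem mul_natCast_mul_pow_sub_one {A : Type*} [CommSemiring A] (f : A) (n : ℕ) :
    f * (n * f ^ (n - 1)) = n * f ^ n := by
  cases n with
  | zero => simp only [Nat.cast_zero, zero_mul, mul_zero]
  | succ n => rw [Nat.add_sub_cancel, pow_succ', mul_left_comm]

-- Multiplying through by `f * g` avoids the exponents `a + b - 1` and `m + n - 1`.
theorem mul_mul_Jb_pow_mul_pow (f g : MvPolynomial (Fin 2) F) (a b m n : ℕ) :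
    f * g * Jb (f ^ a * g ^ m) (f ^ b * g ^ n) =
      (a * n - b * m) * (f ^ (a + b) * g ^ (m + n)) * Jb f g := by
  calc f * g * Jb (f ^ a * g ^ m) (f ^ b * g ^ n)
      = (f * (a * f ^ (a - 1)) * f ^ b * g ^ m * (g * (n * g ^ (n - 1))) -
          f ^ a * (f * (b * f ^ (b - 1))) * (g * (m * g ^ (m - 1))) * g ^ n) * Jb f g := by
        rw [Jb_pow_mul_pow]
        ring
    _ = (a * n - b * m) * (f ^ (a + b) * g ^ (m + n)) * Jb f g := by
        simp only [mul_natCast_mul_pow_sub_one]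
        ring

/-- The polynomial `x^k (1 + x²y)^j`, whose support has the endpoints `(k, 0)` and `(k + 2j, j)` and
lies on the segment joining them. Both `R` and, up to a scalar, `G` are of this form. -/
def edgePoly (R : Type*) [CommSemiring R] (k j : ℕ) : MvPolynomial (Fin 2) R :=
  X 0 ^ k * (1 + X 0 ^ 2 * X 1) ^ j

theorem single_add_single_inj {ι M : Type*} [AddZeroClass M] {i j : ι} (hij : i ≠ j)
    {a b c d : M} :
    Finsupp.single i a + Finsupp.single j b = Finsupp.single i c + Finsupp.single j d ↔
      a = c ∧ b = d := by
  refine ⟨fun h => ⟨?_, ?_⟩, fun ⟨hac, hbd⟩ => hac ▸ hbd ▸ rfl⟩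
  · simpa [hij] using DFunLike.congr_fun h i
  · simpa [hij.symm] using DFunLike.congr_fun h j

theorem edgePoly_eq_sum_monomial (R : Type*) [CommSemiring R] (k j : ℕ) :
    edgePoly R k j = ∑ i ∈ Finset.range (j + 1),
      monomial (Finsupp.single 0 (k + 2 * i) + Finsupp.single 1 i) (j.choose i : R) := by
  rw [edgePoly, add_comm, add_pow, Finset.mul_sum]
  refine Finset.sum_congr rfl fun i _ => ?_
  rw [monomial_add_single, ← C_mul_X_pow_eq_monomial, map_natCast, one_pow]
  ring

theorem coeff_edgePoly (R : Type*) [CommSemiring R] (k j a b : ℕ) :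
    coeff (Finsupp.single 0 a + Finsupp.single 1 b) (edgePoly R k j) =
      if a = k + 2 * b then (j.choose b : R) else 0 := by
  simp only [edgePoly_eq_sum_monomial, coeff_sum, coeff_monomial,
    single_add_single_inj (zero_ne_one (α := Fin 2))]
  rw [Finset.sum_eq_single b]
  · simp only [and_true, eq_comm]
  · exact fun i _ hib => if_neg fun h => hib h.2
  · intro hb
    have choose_eq_zero : j.choose b = 0 := Nat.choose_eq_zero_of_lt (by simpa using hb)
    rw [choose_eq_zero, Nat.cast_zero, ite_self]

theorem mem_supp_edgePoly {k j : ℕ} {p : ℕ × ℕ} :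
    p ∈ Supp (edgePoly F k j) ↔ p.1 = k + 2 * p.2 ∧ (j.choose p.2 : F) ≠ 0 := by
  rw [Supp, Set.mem_ofPred_eq, coeff_edgePoly, ite_ne_right_iff]

theorem start_mem_supp_edgePoly (k j : ℕ) : (k, 0) ∈ Supp (edgePoly F k j) :=
  mem_supp_edgePoly.mpr ⟨rfl, by simp⟩

theorem end_mem_supp_edgePoly (k j : ℕ) : (k + 2 * j, j) ∈ Supp (edgePoly F k j) :=
  mem_supp_edgePoly.mpr ⟨rfl, by simp⟩

theorem snd_le_of_mem_supp_edgePoly {k j : ℕ} {p : ℕ × ℕ} (hp : p ∈ Supp (edgePoly F k j)) :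
    p.2 ≤ j := by
  by_contra! hj
  exact (mem_supp_edgePoly.mp hp).2 (by rw [Nat.choose_eq_zero_of_lt hj, Nat.cast_zero])

theorem isHomog_edgePoly (k j : ℕ) : IsHomog 1 (-2) (edgePoly F k j) := by
  intro p hp q hq
  rw [mem_supp_edgePoly] at hp hq
  omega

theorem not_isMonomial_edgePoly (k : ℕ) {j : ℕ} (hj : j ≠ 0) : ¬ IsMonomial (edgePoly F k j) :=
  fun h => hj <| congrArg Prod.snd (h (end_mem_supp_edgePoly k j) (start_mem_supp_edgePoly k j))

theorem isEn_edgePoly (k j : ℕ) : IsEn 1 (-2) (edgePoly F k j) (k + 2 * j, j) :=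
  (isHomog_edgePoly k j).isEn_iff.mpr
    ⟨end_mem_supp_edgePoly k j, fun _ => snd_le_of_mem_supp_edgePoly⟩

theorem Jb_X_one_add : Jb (X 0) (1 + X 0 ^ 2 * X 1 : MvPolynomial (Fin 2) F) = X 0 ^ 2 := by
  simp [Jb]

theorem Jb_edgePoly (k j : ℕ) :
    Jb (edgePoly F k (j + 1)) (edgePoly F (k + 1) j) =
      C (-((k + 1 + j : ℕ) : F)) * edgePoly F (k + 1) j ^ 2 := by
  have x_ne_zero : (X 0 : MvPolynomial (Fin 2) F) ≠ 0 := X_ne_zero 0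
  have u_ne_zero : (1 + X 0 ^ 2 * X 1 : MvPolynomial (Fin 2) F) ≠ 0 := fun h => by
    simpa using congrArg (eval 0) h
  refine mul_left_cancel₀ (mul_ne_zero x_ne_zero u_ne_zero) ?_
  simp only [edgePoly, mul_mul_Jb_pow_mul_pow, Jb_X_one_add, map_neg,
    map_natCast]
  push_cast
  ring

end

theorem stmt5_general (K : Type*) [Field K] (k j : ℕ) (hk : 1 ≤ k) (hj : 1 ≤ j)
    (hkj : ((k + j : ℕ) : K) ≠ 0) :
    ∃ R G : MvPolynomial (Fin 2) K, IsHomog 1 (-2) R ∧ IsHomog 1 (-2) G ∧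
      ¬ IsMonomial R ∧ IsEn 1 (-2) R (k + 2 * j, j) ∧ Jb G R = R ^ 2 := by
  obtain ⟨m, rfl⟩ := Nat.exists_eq_add_of_le' hk
  refine ⟨edgePoly K (m + 1) j, C (-((m + 1 + j : ℕ) : K)⁻¹) * edgePoly K m (j + 1),
    isHomog_edgePoly _ _, (isHomog_edgePoly _ _).C_mul _,
    not_isMonomial_edgePoly _ (Nat.one_le_iff_ne_zero.mp hj), isEn_edgePoly _ _, ?_⟩
  rw [Jb_C_mul_left, Jb_edgePoly, ← mul_assoc, ← C_mul, neg_mul_neg, inv_mul_cancel₀ hkj, C_1,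
    one_mul]

/-- For `(a₀,b₀)=(k+2j, j)` with `k,j ≥ 1` there are `(1,-2)`-homogeneous
polynomials `R, G` with `R` not a monomial, `en_{1,-2}(R)=(a₀,b₀)` and `[G,R]=R²`. -/
theorem stmt5 (K : Type*) [Field K] [CharZero K] (k j : ℕ) (hk : 1 ≤ k) (hj : 1 ≤ j) :
    ∃ R G : MvPolynomial (Fin 2) K, IsHomog 1 (-2) R ∧ IsHomog 1 (-2) G ∧
      ¬ IsMonomial R ∧ IsEn 1 (-2) R (k + 2 * j, j) ∧ Jb G R = R ^ 2 :=
  stmt5_general K k j hk hj (Nat.cast_ne_zero.mpr (by omega))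

end
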